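/- Let A be a Hopf algebra over a field k and let K be a Hopf algebra in the braided category of left Yetter–Drinfel'd modules over A; that is, K is a left A-Yetter–Drinfel'd module (action a·h, coaction δ(h) = h_{(-1)} ⊗ h_{(0)}) which is a k-algebra and k-coalgebra such that: the unit and counit are A-(co)linear, the multiplication and comultiplication of K are A-linear and A-colinear, Δ_K(hk) = h_{(1)} ((h_{(2)})_{(-1)}·k_{(1)}) ⊗ (h_{(2)})_{(0)} k_{(2)}, ε_K is an algebra map, Δ_K(1) = 1 ⊗ 1, and there is a linear map S_K : K → K with S_K(h_{(1)}) h_{(2)} = ε_K(h) 1 = h_{(1)} S_K(h_{(2)}). Then the vector space K ⊗ A, with multiplication (h⊗a)(k⊗b) = h (a_{(1)}·k) ⊗ a_{(2)} b, unit 1⊗1, comultiplication Δ(h⊗a) = (h_{(1)} ⊗ (h_{(2)})_{(-1)} a_{(1)}) ⊗ ((h_{(2)})_{(0)} ⊗ a_{(2)}), and counit ε_K ⊗ ε_A, is a Hopf algebra over k (the Radford biproduct K ⋊ A): it is a bialgebra and its identity map has a convolution inverse, an antipode. -/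

import Mathlib

open TensorProduct

noncomputable section

variable {k : Type*} [Field k]
variable {A : Type*} [Ring A] [HopfAlgebra k A]
variable {X Y Z : Type*} [AddCommGroup X] [Module k X] [AddCommGroup Y] [Module k Y]
  [AddCommGroup Z] [Module k Z]

/-- LHS of the left Yetter–Drinfel'd compatibility condition, as a linear map
`A ⊗ X → A ⊗ X` sending `h ⊗ x` to `h₍₁₎x₍₋₁₎ ⊗ h₍₂₎ · x₍₀₎`. -/
def ydL (act : A ⊗[k] X →ₗ[k] X) (coact : X →ₗ[k] A ⊗[k] X) :
    A ⊗[k] X →ₗ[k] A ⊗[k] X :=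
  TensorProduct.map (LinearMap.mul' k A) act
    ∘ₗ (TensorProduct.tensorTensorTensorComm k A A A X).toLinearMap
    ∘ₗ TensorProduct.map (Coalgebra.comul (R := k)) coact

/-- RHS of the left Yetter–Drinfel'd compatibility condition, sending `h ⊗ x` to
`(h₍₁₎·x)₍₋₁₎ h₍₂₎ ⊗ (h₍₁₎·x)₍₀₎`. -/
def ydR (act : A ⊗[k] X →ₗ[k] X) (coact : X →ₗ[k] A ⊗[k] X) :
    A ⊗[k] X →ₗ[k] A ⊗[k] X :=
  TensorProduct.map (LinearMap.mul' k A) LinearMap.id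
    ∘ₗ (TensorProduct.assoc k A A X).symm.toLinearMap
    ∘ₗ LinearMap.lTensor A (TensorProduct.comm k X A).toLinearMap
    ∘ₗ (TensorProduct.assoc k A X A).toLinearMap
    ∘ₗ LinearMap.rTensor A coact
    ∘ₗ LinearMap.rTensor A act
    ∘ₗ (TensorProduct.assoc k A X A).symm.toLinearMap
    ∘ₗ LinearMap.lTensor A (TensorProduct.comm k A X).toLinearMap
    ∘ₗ (TensorProduct.assoc k A A X).toLinearMap
    ∘ₗ LinearMap.rTensor X (Coalgebra.comul (R := k))

/-- A left Yetter–Drinfel'd module structure over the Hopf algebra `A` on the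
vector space `X`: a left action, a left coaction, and the compatibility. -/
structure IsYD (act : A ⊗[k] X →ₗ[k] X) (coact : X →ₗ[k] A ⊗[k] X) : Prop where
  act_one : ∀ x : X, act (1 ⊗ₜ[k] x) = x
  act_mul : ∀ (a a' : A) (x : X),
    act ((a * a') ⊗ₜ[k] x) = act (a ⊗ₜ[k] act (a' ⊗ₜ[k] x))
  coassoc : (TensorProduct.assoc k A A X).toLinearMap
      ∘ₗ LinearMap.rTensor X (Coalgebra.comul (R := k)) ∘ₗ coact
      = LinearMap.lTensor A coact ∘ₗ coact
  counit_coact : (TensorProduct.lid k X).toLinearMap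
      ∘ₗ LinearMap.rTensor X (Coalgebra.counit (R := k)) ∘ₗ coact = LinearMap.id
  yd : ydL act coact = ydR act coact

/-- The diagonal action `h · (x ⊗ y) = h₍₁₎·x ⊗ h₍₂₎·y` on a tensor product. -/
def tAct (actX : A ⊗[k] X →ₗ[k] X) (actY : A ⊗[k] Y →ₗ[k] Y) :
    A ⊗[k] (X ⊗[k] Y) →ₗ[k] X ⊗[k] Y :=
  TensorProduct.map actX actY
    ∘ₗ (TensorProduct.tensorTensorTensorComm k A A X Y).toLinearMap
    ∘ₗ LinearMap.rTensor (X ⊗[k] Y) (Coalgebra.comul (R := k))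

/-- The codiagonal coaction `x ⊗ y ↦ x₍₋₁₎y₍₋₁₎ ⊗ (x₍₀₎ ⊗ y₍₀₎)` on a tensor product. -/
def tCoact (coactX : X →ₗ[k] A ⊗[k] X) (coactY : Y →ₗ[k] A ⊗[k] Y) :
    X ⊗[k] Y →ₗ[k] A ⊗[k] (X ⊗[k] Y) :=
  LinearMap.rTensor (X ⊗[k] Y) (LinearMap.mul' k A)
    ∘ₗ (TensorProduct.tensorTensorTensorComm k A X A Y).toLinearMap
    ∘ₗ TensorProduct.map coactX coactY

/-- The Yetter–Drinfel'd braiding `c_{X,Y} : x ⊗ y ↦ x₍₋₁₎ · y ⊗ x₍₀₎`. -/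
def ydBraid (coactX : X →ₗ[k] A ⊗[k] X) (actY : A ⊗[k] Y →ₗ[k] Y) :
    X ⊗[k] Y →ₗ[k] Y ⊗[k] X :=
  LinearMap.rTensor X actY
    ∘ₗ (TensorProduct.assoc k A Y X).symm.toLinearMap
    ∘ₗ LinearMap.lTensor A (TensorProduct.comm k X Y).toLinearMap
    ∘ₗ (TensorProduct.assoc k A X Y).toLinearMap
    ∘ₗ LinearMap.rTensor Y coactX

/-- The map `θ_X : x ↦ S(x₍₋₁₎) · x₍₀₎`. -/
def ydTheta (act : A ⊗[k] X →ₗ[k] X) (coact : X →ₗ[k] A ⊗[k] X) : X →ₗ[k] X :=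
  act ∘ₗ LinearMap.rTensor X (HopfAlgebra.antipode (R := k)) ∘ₗ coact

section Biproduct

variable {K : Type*} [Ring K] [Algebra k K]

/-- The multiplication `(h⊗a)(k⊗b) = h (a₍₁₎·k) ⊗ a₍₂₎b` of the Radford biproduct
`K ⋊ A`. -/
def biMul (actK : A ⊗[k] K →ₗ[k] K) :
    (K ⊗[k] A) ⊗[k] (K ⊗[k] A) →ₗ[k] K ⊗[k] A :=
  TensorProduct.map
      (LinearMap.mul' k K ∘ₗ LinearMap.lTensor K actK
        ∘ₗ (TensorProduct.assoc k K A K).toLinearMap)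
      (LinearMap.mul' k A)
    ∘ₗ (TensorProduct.tensorTensorTensorComm k (K ⊗[k] A) A K A).toLinearMap
    ∘ₗ LinearMap.rTensor (K ⊗[k] A) (TensorProduct.assoc k K A A).symm.toLinearMap
    ∘ₗ LinearMap.rTensor (K ⊗[k] A) (LinearMap.lTensor K (Coalgebra.comul (R := k)))

/-- The comultiplication `Δ(h⊗a) = (h₍₁₎ ⊗ (h₍₂₎)₍₋₁₎a₍₁₎) ⊗ ((h₍₂₎)₍₀₎ ⊗ a₍₂₎)` of
the Radford biproduct `K ⋊ A`. -/
def biComul (comulK : K →ₗ[k] K ⊗[k] K) (coactK : K →ₗ[k] A ⊗[k] K) :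
    K ⊗[k] A →ₗ[k] (K ⊗[k] A) ⊗[k] (K ⊗[k] A) :=
  LinearMap.rTensor (K ⊗[k] A)
      (LinearMap.lTensor K (LinearMap.mul' k A) ∘ₗ (TensorProduct.assoc k K A A).toLinearMap)
    ∘ₗ (TensorProduct.tensorTensorTensorComm k (K ⊗[k] A) K A A).toLinearMap
    ∘ₗ LinearMap.rTensor (A ⊗[k] A) (TensorProduct.assoc k K A K).symm.toLinearMap
    ∘ₗ LinearMap.rTensor (A ⊗[k] A) (LinearMap.lTensor K coactK)
    ∘ₗ TensorProduct.map comulK (Coalgebra.comul (R := k))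

/-- The counit `ε_K ⊗ ε_A` of the Radford biproduct `K ⋊ A`. -/
def biCounit (counitK : K →ₗ[k] k) : K ⊗[k] A →ₗ[k] k :=
  LinearMap.mul' k k ∘ₗ TensorProduct.map counitK (Coalgebra.counit (R := k))

/-!
For a coalgebra `C` and an algebra `B` the linear maps `C → B` form a ring under convolution, and
the theorem consists of identities in such rings. A pair of algebra maps `f : K → B`, `g : A → B`
extends to `x ⊗ a ↦ f(x) g(a)` on the smash product exactly when it is *covariant*:
`g(a) f(x) = f(a₍₁₎ · x) g(a₍₂₎)`. The Yetter–Drinfel'd condition says that covariance survives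
twisting `f` by the coaction, so the two embeddings of the smash product in its tensor square have a
convolution product which is again an algebra map; this is the comultiplication. Coassociativity and
the counit laws are equalities of algebra maps, hence need only be compared on `K` and on `A`.

The projections `x ⊗ a ↦ ε(a) x` and `x ⊗ a ↦ ε(x) a` are coalgebra maps, and the identity is the
convolution product of their composites with the embeddings of `K` and `A`. Both factors are
convolution invertible since `K` and `A` have antipodes, so the identity is invertible too.
-/

namespace Radford

open WithConv Coalgebra

section Convolution

variable {R C D M B B' : Type*} [CommSemiring R]
  [AddCommMonoid C] [Module R C] [Coalgebra R C] [AddCommMonoid D] [Module R D] [Coalgebra R D]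
  [AddCommMonoid M] [Module R M] [Semiring B] [Algebra R B] [Semiring B'] [Algebra R B']

/-- Post-composition with an algebra map, as a map of convolution rings. -/
def convMap (φ : B →ₐ[R] B') : WithConv (C →ₗ[R] B) →+* WithConv (C →ₗ[R] B') where
  toFun f := toConv (φ.toLinearMap ∘ₗ f.ofConv)
  map_zero' := by ext; simp
  map_one' := by ext; simp
  map_add' f g := by ext; simp
  map_mul' f g := congrArg toConv (LinearMap.algHom_comp_convMul_distrib φ f g)

lemma convMap_toConv (φ : B →ₐ[R] B') (f : C →ₗ[R] B) :
    convMap φ (toConv f) = toConv (φ.toLinearMap ∘ₗ f) := rfl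

/-- Pre-composition with a coalgebra map, as a map of convolution monoids. -/
def convComap (p : D →ₗc[R] C) : WithConv (C →ₗ[R] B) →* WithConv (D →ₗ[R] B) where
  toFun f := toConv (f.ofConv ∘ₗ p.toLinearMap)
  map_one' := by ext; simp
  map_mul' f g := congrArg toConv (LinearMap.convMul_comp_coalgHom_distrib f g p)

/-- The constant maps `c ↦ ε(c) b`, which embed the algebra `B` in the convolution ring. -/
def convConst : B →+* WithConv (C →ₗ[R] B) where
  toFun b := toConv (LinearMap.toSpanSingleton R B b ∘ₗ counit)
  map_zero' := by ext; simp
  map_one' := by ext; simp [Algebra.algebraMap_eq_smul_one]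
  map_add' b b' := by ext; simp
  map_mul' b b' := by ext; simp [← LinearMap.map_comp_lTensor]

lemma mul_convConst (f : WithConv (C →ₗ[R] B)) (b : B) :
    f * convConst b = toConv (LinearMap.mulRight R b ∘ₗ f.ofConv) := by
  ext c
  simp [convConst, ← LinearMap.map_comp_lTensor]

lemma convConst_mul (b : B) (f : WithConv (C →ₗ[R] B)) :
    convConst b * f = toConv (LinearMap.mulLeft R b ∘ₗ f.ofConv) := by
  ext c
  simp [convConst, ← LinearMap.map_comp_rTensor]

lemma commute_convConst {f : WithConv (C →ₗ[R] B)} {b : B} (h : ∀ c, Commute (f.ofConv c) b) :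
    Commute f (convConst b) := by
  rw [Commute, SemiconjBy, mul_convConst, convConst_mul]
  ext c
  exact h c

/-- The orbit maps `c ↦ c · x` of an action of `C` on `M`. -/
def orbitMap (act : C ⊗[R] M →ₗ[R] M) : M →ₗ[R] C →ₗ[R] M :=
  (TensorProduct.curry act).flip

/-- Covariance `g(c) f(x) = ∑ f(c₍₁₎ · x) g(c₍₂₎)` of a pair of maps into an algebra: the pair
implements the action of `C` on `M` inside that algebra. -/
def IsCovariant (act : C ⊗[R] M →ₗ[R] M) (f : M →ₗ[R] B) (g : WithConv (C →ₗ[R] B)) : Prop :=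
  ∀ x, g * convConst (f x) = toConv (f ∘ₗ orbitMap act x) * g

lemma isCovariant_iff {act : C ⊗[R] M →ₗ[R] M} {f : M →ₗ[R] B} {g : WithConv (C →ₗ[R] B)} :
    IsCovariant act f g ↔
      ∀ x c, g.ofConv c * f x = (toConv (f ∘ₗ orbitMap act x) * g).ofConv c := by
  simp only [IsCovariant, mul_convConst]
  exact forall_congr' fun x => ⟨fun h c => congr($h c), fun h => by ext c; exact h c⟩

lemma IsCovariant.mul_of_commute {act : C ⊗[R] M →ₗ[R] M} {f : M →ₗ[R] B}
    {g g' : WithConv (C →ₗ[R] B)} (h : IsCovariant act f g)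
    (hcomm : ∀ c x, Commute (g'.ofConv c) (f x)) : IsCovariant act f (g * g') := fun x => by
  rw [mul_assoc, (commute_convConst fun c => hcomm c x).eq, ← mul_assoc, h x, mul_assoc]

lemma convMap_convConst (φ : B →ₐ[R] B') (b : B) :
    convMap (C := C) φ (convConst b) = convConst (φ b) := by
  ext c
  simp [convMap, convConst]

lemma IsCovariant.algHom_comp {act : C ⊗[R] M →ₗ[R] M} {f : M →ₗ[R] B}
    {g : WithConv (C →ₗ[R] B)} (h : IsCovariant act f g) (φ : B →ₐ[R] B') :
    IsCovariant act (φ.toLinearMap ∘ₗ f) (convMap φ g) := fun x => by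
  have hx := congrArg (convMap φ) (h x)
  rwa [map_mul, map_mul, convMap_convConst] at hx

lemma tensorLift_toLinearMap {E F : Type*} [Semiring E] [Algebra R E] [Semiring F] [Algebra R F]
    (f : E →ₐ[R] B) (g : F →ₐ[R] B) (h : ∀ a b, Commute (f a) (g b)) :
    (Algebra.TensorProduct.lift f g h).toLinearMap =
      LinearMap.mul' R B ∘ₗ TensorProduct.map f.toLinearMap g.toLinearMap := by
  ext; simp

lemma map_eq_mul'_map {X Y : Type*} [AddCommMonoid X] [Module R X] [AddCommMonoid Y] [Module R Y]
    (f : X →ₗ[R] B) (g : Y →ₗ[R] B') :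
    map f g = LinearMap.mul' R (B ⊗[R] B') ∘ₗ
      map (Algebra.TensorProduct.includeLeft.toLinearMap ∘ₗ f)
        (Algebra.TensorProduct.includeRight.toLinearMap ∘ₗ g) := by
  ext; simp

lemma toConv_includeLeft_mul_toConv_includeRight [Coalgebra R B] :
    toConv (Algebra.TensorProduct.includeLeft : B →ₐ[R] B ⊗[R] B).toLinearMap *
      toConv (Algebra.TensorProduct.includeRight : B →ₐ[R] B ⊗[R] B).toLinearMap =
        toConv comul := by
  have h := map_eq_mul'_map (R := R) (LinearMap.id : B →ₗ[R] B) (LinearMap.id : B →ₗ[R] B)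
  rw [TensorProduct.map_id] at h
  ext c
  exact congr($h (comul c)).symm

section Bialgebra

variable {H : Type*} [Semiring H] [Bialgebra R H] (f g : H →ₐ[R] B)
  (h : ∀ a b, Commute (f a) (g b))

/-- The convolution of algebra maps with commuting ranges, as an algebra map. -/
def convAlgHom : H →ₐ[R] B :=
  (Algebra.TensorProduct.lift f g h).comp (Bialgebra.comulAlgHom R H)

lemma toConv_convAlgHom :
    toConv (convAlgHom f g h).toLinearMap = toConv f.toLinearMap * toConv g.toLinearMap := by
  ext c
  exact LinearMap.congr_fun (tensorLift_toLinearMap f g h) (comul c)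

lemma convAlgHom_apply {c : H} {ι : Type*} (𝓡 : Coalgebra.Repr R c ι) :
    convAlgHom f g h c = ∑ i ∈ 𝓡.index, f (𝓡.left i) * g (𝓡.right i) :=
  congr(ofConv $(toConv_convAlgHom f g h) c).trans (𝓡.convMul_apply _ _)

end Bialgebra

end Convolution

section Coalgebra

/-- The coalgebra structure whose counit laws are stated through the unitors of `⊗`. -/
abbrev coalgebraOfUnitors {R C : Type*} [CommSemiring R] [AddCommMonoid C] [Module R C]
    (Δ : C →ₗ[R] C ⊗[R] C) (ε : C →ₗ[R] R)
    (coassoc : (TensorProduct.assoc R C C C).toLinearMap ∘ₗ LinearMap.rTensor C Δ ∘ₗ Δ =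
      LinearMap.lTensor C Δ ∘ₗ Δ)
    (left_counit : (TensorProduct.lid R C).toLinearMap ∘ₗ LinearMap.rTensor C ε ∘ₗ Δ = .id)
    (right_counit : (TensorProduct.rid R C).toLinearMap ∘ₗ LinearMap.lTensor C ε ∘ₗ Δ = .id) :
    Coalgebra R C where
  comul := Δ
  counit := ε
  coassoc := coassoc
  rTensor_counit_comp_comul :=
    LinearMap.ext fun c => (TensorProduct.lid R C).injective <| by
      simpa using LinearMap.congr_fun left_counit c
  lTensor_counit_comp_comul :=
    LinearMap.ext fun c => (TensorProduct.rid R C).injective <| by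
      simpa using LinearMap.congr_fun right_counit c

variable {R C : Type*} [CommSemiring R] [AddCommMonoid C] [Module R C] [Coalgebra R C]

lemma lid_comp_rTensor_counit_comp_comul : (TensorProduct.lid R C).toLinearMap ∘ₗ
    LinearMap.rTensor C counit ∘ₗ comul = LinearMap.id := by
  ext; simp

lemma rid_comp_lTensor_counit_comp_comul : (TensorProduct.rid R C).toLinearMap ∘ₗ
    LinearMap.lTensor C counit ∘ₗ comul = LinearMap.id := by
  ext; simp

lemma comul_comp_mul' {H : Type*} [Semiring H] [Bialgebra R H] :
    comul ∘ₗ LinearMap.mul' R H = map (LinearMap.mul' R H) (LinearMap.mul' R H) ∘ₗ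
      (tensorTensorTensorComm R H H H H).toLinearMap ∘ₗ map comul comul := by
  rw [← LinearMap.comp_assoc, ← LinearMap.mul'_tensor]
  ext; simp

end Coalgebra

section Antipode

variable {R H C D : Type*} [CommSemiring R] [Semiring H] [Algebra R H] [Coalgebra R H]
  [Semiring C] [Algebra R C] [Coalgebra R C] [Semiring D] [Algebra R D] [Coalgebra R D]

lemma exists_antipode_iff : (∃ S : H →ₗ[R] H,
      (∀ c, LinearMap.mul' R H (LinearMap.rTensor H S (comul c)) = counit (R := R) c • (1 : H)) ∧
      ∀ c, LinearMap.mul' R H (LinearMap.lTensor H S (comul c)) = counit (R := R) c • (1 : H)) ↔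
    IsUnit (toConv (LinearMap.id : H →ₗ[R] H)) := by
  have hconv (f g : H →ₗ[R] H) : toConv f * toConv g = 1 ↔
      ∀ c, LinearMap.mul' R H (map f g (comul c)) = counit (R := R) c • (1 : H) := by
    simp [WithConv.ext_iff, LinearMap.ext_iff, Algebra.algebraMap_eq_smul_one]
  rw [isUnit_iff_exists]
  exact ⟨fun ⟨S, hl, hr⟩ => ⟨toConv S, (hconv _ _).2 hr, (hconv _ _).2 hl⟩,
    fun ⟨S, hr, hl⟩ => ⟨S.ofConv, (hconv _ _).1 hl, (hconv _ _).1 hr⟩⟩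

lemma isUnit_toConv_comp (i : C →ₐ[R] H) (p : H →ₗc[R] C)
    (h : IsUnit (toConv (LinearMap.id : C →ₗ[R] C))) :
    IsUnit (toConv (i.toLinearMap ∘ₗ p.toLinearMap)) :=
  (h.map (convMap i)).map (convComap p)

lemma isUnit_toConv_id_of_factorization (i : C →ₐ[R] H) (p : H →ₗc[R] C) (j : D →ₐ[R] H)
    (q : H →ₗc[R] D) (hC : IsUnit (toConv (LinearMap.id : C →ₗ[R] C)))
    (hD : IsUnit (toConv (LinearMap.id : D →ₗ[R] D)))
    (hid : toConv (i.toLinearMap ∘ₗ p.toLinearMap) * toConv (j.toLinearMap ∘ₗ q.toLinearMap) =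
      toConv LinearMap.id) : IsUnit (toConv (LinearMap.id : H →ₗ[R] H)) :=
  hid ▸ (isUnit_toConv_comp i p hC).mul (isUnit_toConv_comp j q hD)

end Antipode

section Action

variable {B : Type*} [Semiring B] [Algebra k B]

lemma mul'_map_orbitMap_tAct (actX : A ⊗[k] X →ₗ[k] X) (actY : A ⊗[k] Y →ₗ[k] Y)
    (f : X →ₗ[k] B) (g : Y →ₗ[k] B) (x : X) (y : Y) :
    toConv (LinearMap.mul' k B ∘ₗ map f g ∘ₗ orbitMap (tAct actX actY) (x ⊗ₜ y)) =
      toConv (f ∘ₗ orbitMap actX x) * toConv (g ∘ₗ orbitMap actY y) := by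
  ext a
  change LinearMap.mul' k B (map f g (map actX actY
    (tensorTensorTensorComm k A A X Y (comul a ⊗ₜ (x ⊗ₜ y))))) =
    LinearMap.mul' k B (map (f ∘ₗ orbitMap actX x) (g ∘ₗ orbitMap actY y) (comul a))
  induction comul (R := k) a with
  | zero => simp
  | add s t hs ht => simp only [add_tmul, map_add, hs, ht]
  | tmul b c => rfl

/-- `K` is a left `A`-module algebra under the action `actK`. The first two axioms are also part of
`IsYD`, but the smash product is built before any coaction is given. -/
class IsModuleAlgebra (actK : A ⊗[k] K →ₗ[k] K) : Prop where
  act_one : ∀ x : K, actK (1 ⊗ₜ[k] x) = x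
  act_mul : ∀ (a a' : A) (x : K), actK ((a * a') ⊗ₜ[k] x) = actK (a ⊗ₜ[k] actK (a' ⊗ₜ[k] x))
  act_unit : ∀ a : A, actK (a ⊗ₜ[k] (1 : K)) = counit (R := k) a • (1 : K)
  act_comp_mul' : actK ∘ₗ LinearMap.lTensor A (LinearMap.mul' k K) =
    LinearMap.mul' k K ∘ₗ tAct actK actK

lemma biMul_tmul_tmul (actK : A ⊗[k] K →ₗ[k] K) (x y : K) {a : A} (b : A) {ι : Type*}
    (𝓡 : Coalgebra.Repr k a ι) : biMul actK ((x ⊗ₜ a) ⊗ₜ (y ⊗ₜ b)) =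
      ∑ i ∈ 𝓡.index, (x * actK (𝓡.left i ⊗ₜ y)) ⊗ₜ (𝓡.right i * b) := by
  simp [biMul, ← 𝓡.eq, sum_tmul, tmul_sum]

lemma IsCovariant.mul'_map_biMul {actK : A ⊗[k] K →ₗ[k] K} {f : K →ₐ[k] B} {g : A →ₐ[k] B}
    (h : IsCovariant actK f.toLinearMap (toConv g.toLinearMap)) (u v : K ⊗[k] A) :
    LinearMap.mul' k B (map f.toLinearMap g.toLinearMap (biMul actK (u ⊗ₜ v))) =
      LinearMap.mul' k B (map f.toLinearMap g.toLinearMap u) *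
        LinearMap.mul' k B (map f.toLinearMap g.toLinearMap v) := by
  induction u with
  | zero => simp
  | add u u' hu hu' => simp only [add_tmul, map_add, hu, hu', add_mul]
  | tmul x a =>
  induction v with
  | zero => simp
  | add v v' hv hv' => simp only [tmul_add, map_add, hv, hv', mul_add]
  | tmul y b =>
  have hya : g a * f y =
      ∑ i ∈ (ℛ k a).index, f (actK ((ℛ k a).left i ⊗ₜ y)) * g ((ℛ k a).right i) :=
    (isCovariant_iff.1 h y a).trans ((ℛ k a).convMul_apply _ _)
  calc _ = f x * (g a * f y) * g b := by
        rw [biMul_tmul_tmul actK x y b (ℛ k a), hya]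
        simp [Finset.mul_sum, Finset.sum_mul, mul_assoc]
    _ = _ := by simp [mul_assoc]

section ModuleAlgebra

variable (actK : A ⊗[k] K →ₗ[k] K) [IsModuleAlgebra actK]

lemma orbitMap_mul (x y : K) :
    toConv (orbitMap actK (x * y)) = toConv (orbitMap actK x) * toConv (orbitMap actK y) := by
  have h := mul'_map_orbitMap_tAct actK actK .id .id x y
  rw [TensorProduct.map_id, LinearMap.id_comp] at h
  rw [← LinearMap.id_comp (orbitMap actK x), ← LinearMap.id_comp (orbitMap actK y), ← h]
  ext a
  exact LinearMap.congr_fun IsModuleAlgebra.act_comp_mul' (a ⊗ₜ (x ⊗ₜ y))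

/-- The representation of `A` on the underlying vector space of the module algebra `K`. -/
def actionAlgHom : A →ₐ[k] Module.End k K :=
  .ofLinearMap (TensorProduct.curry actK) (LinearMap.ext IsModuleAlgebra.act_one) fun a a' =>
    LinearMap.ext (IsModuleAlgebra.act_mul a a')

lemma isCovariant_lmul_actionAlgHom :
    IsCovariant actK (Algebra.lmul k K).toLinearMap
      (toConv (actionAlgHom actK).toLinearMap) := by
  refine isCovariant_iff.2 fun x a => LinearMap.ext fun y => ?_
  have h : actK (a ⊗ₜ (x * y)) = _ := congr($(orbitMap_mul actK x y) a)
  refine (h.trans ((ℛ k a).convMul_apply _ _)).trans ?_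
  have h' := (ℛ k a).convMul_apply
    (toConv ((Algebra.lmul k K).toLinearMap ∘ₗ orbitMap actK x))
    (toConv (actionAlgHom actK).toLinearMap)
  exact (LinearMap.congr_fun (h'.trans rfl) y).trans (LinearMap.sum_apply _ _ _) |>.symm

end ModuleAlgebra

end Action

section Smash

variable (actK : A ⊗[k] K →ₗ[k] K)

lemma commute_rTensorAlgHom_lTensorAlgHom {S T : Type*} [Semiring S] [Algebra k S] [Semiring T]
    [Algebra k T] (f : S →ₐ[k] Module.End k X) (g : T →ₐ[k] Module.End k Y) (s : S) (t : T) :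
    Commute ((Module.End.rTensorAlgHom k X Y).comp f s)
      ((Module.End.lTensorAlgHom k Y X).comp g t) :=
  TensorProduct.ext' fun _ _ => rfl

/-- The left multiplications by `x ⊗ 1` in the smash product. -/
def smashLmulLeft : K →ₐ[k] Module.End k (K ⊗[k] A) :=
  (Module.End.rTensorAlgHom k K A).comp (Algebra.lmul k K)

lemma smashLmulLeft_apply_tmul (x y : K) (b : A) :
    smashLmulLeft x (y ⊗ₜ[k] b) = (x * y) ⊗ₜ b := rfl

variable [IsModuleAlgebra actK]

/-- The left multiplications by `1 ⊗ a` in the smash product. -/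
def smashLmulRight : A →ₐ[k] Module.End k (K ⊗[k] A) :=
  convAlgHom ((Module.End.rTensorAlgHom k K A).comp (actionAlgHom actK))
    ((Module.End.lTensorAlgHom k A K).comp (Algebra.lmul k A))
    (commute_rTensorAlgHom_lTensorAlgHom _ _)

lemma smashLmulRight_apply_tmul {a : A} (y : K) (b : A) {ι : Type*} (𝓡 : Coalgebra.Repr k a ι) :
    smashLmulRight actK a (y ⊗ₜ b) =
      ∑ i ∈ 𝓡.index, actK (𝓡.left i ⊗ₜ y) ⊗ₜ (𝓡.right i * b) := by
  rw [smashLmulRight, convAlgHom_apply _ _ _ 𝓡, LinearMap.sum_apply]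
  rfl

lemma isCovariant_smashLmul :
    IsCovariant actK (smashLmulLeft (A := A) (K := K)).toLinearMap
      (toConv (smashLmulRight actK).toLinearMap) := by
  rw [smashLmulRight, toConv_convAlgHom]
  exact ((isCovariant_lmul_actionAlgHom actK).algHom_comp
    (Module.End.rTensorAlgHom k K A)).mul_of_commute fun _ _ =>
      (commute_rTensorAlgHom_lTensorAlgHom (Algebra.lmul k K) (Algebra.lmul k A) _ _).symm

lemma biMul_eq_smashLmul (u v : K ⊗[k] A) :
    biMul actK (u ⊗ₜ v) = LinearMap.mul' k (Module.End k (K ⊗[k] A))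
      (map smashLmulLeft.toLinearMap (smashLmulRight actK).toLinearMap u) v := by
  induction u with
  | zero => simp
  | add u u' hu hu' => simp only [add_tmul, map_add, hu, hu', LinearMap.add_apply]
  | tmul x a =>
  induction v with
  | zero => simp
  | add v v' hv hv' => simp only [tmul_add, map_add, hv, hv']
  | tmul y b =>
  simp [biMul_tmul_tmul actK x y b (ℛ k a), smashLmulRight_apply_tmul actK y b (ℛ k a),
    smashLmulLeft_apply_tmul]

lemma biMul_assoc (u v w : K ⊗[k] A) :
    biMul actK (biMul actK (u ⊗ₜ v) ⊗ₜ w) = biMul actK (u ⊗ₜ biMul actK (v ⊗ₜ w)) := by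
  rw [biMul_eq_smashLmul actK _ w, (isCovariant_smashLmul actK).mul'_map_biMul,
    biMul_eq_smashLmul actK u, biMul_eq_smashLmul actK v w, Module.End.mul_apply]

lemma one_biMul (u : K ⊗[k] A) : biMul actK ((1 ⊗ₜ 1) ⊗ₜ u) = u := by
  simp [biMul_eq_smashLmul]

lemma biMul_one (u : K ⊗[k] A) : biMul actK (u ⊗ₜ (1 ⊗ₜ 1)) = u := by
  induction u with
  | zero => simp
  | add u u' hu hu' => simp only [add_tmul, map_add, hu, hu']
  | tmul x a =>
    simp only [biMul_tmul_tmul actK x 1 1 (ℛ k a), IsModuleAlgebra.act_unit, mul_smul_comm,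
      smul_tmul, ← tmul_sum, mul_one, sum_counit_smul]

/-- The smash product of a module algebra `K` with `A`, that is `K ⊗ A` with the multiplication
`biMul actK`. -/
def SmashProduct (_ : A ⊗[k] K →ₗ[k] K) : Type _ := K ⊗[k] A

namespace SmashProduct

instance : AddCommGroup (SmashProduct actK) := inferInstanceAs (AddCommGroup (K ⊗[k] A))

instance : Module k (SmashProduct actK) := inferInstanceAs (Module k (K ⊗[k] A))

instance : Ring (SmashProduct actK) where
  __ := (inferInstance : AddCommGroup (SmashProduct actK))
  mul u v := biMul actK (u ⊗ₜ v)
  one := (1 : K) ⊗ₜ[k] (1 : A)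
  left_distrib u v w := congrArg (biMul actK) (tmul_add u v w) |>.trans (map_add _ _ _)
  right_distrib u v w := congrArg (biMul actK) (add_tmul u v w) |>.trans (map_add _ _ _)
  zero_mul u := congrArg (biMul actK) (zero_tmul _ u) |>.trans (map_zero _)
  mul_zero u := congrArg (biMul actK) (tmul_zero _ u) |>.trans (map_zero _)
  mul_assoc := biMul_assoc actK
  one_mul := one_biMul actK
  mul_one := biMul_one actK

instance : Algebra k (SmashProduct actK) :=
  .ofModule (fun r (u v : K ⊗[k] A) =>
      congrArg (biMul actK) (smul_tmul' r u v).symm |>.trans (map_smul _ r _))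
    fun r (u v : K ⊗[k] A) => congrArg (biMul actK) (tmul_smul r u v) |>.trans (map_smul _ r _)

/-- The identity of `K ⊗ A`, as a linear equivalence with the smash product. -/
def of : K ⊗[k] A ≃ₗ[k] SmashProduct actK := LinearEquiv.refl k _

/-- The embedding `x ↦ x ⊗ 1`. -/
def inl : K →ₐ[k] SmashProduct actK :=
  .ofLinearMap (of actK ∘ₗ (TensorProduct.mk k K A).flip 1) rfl fun x y => by
    have h := biMul_eq_smashLmul actK (x ⊗ₜ[k] 1) (y ⊗ₜ[k] 1)
    simp only [map_tmul, AlgHom.toLinearMap_apply, map_one, LinearMap.mul'_apply, mul_one,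
      smashLmulLeft_apply_tmul] at h
    exact congrArg (of actK) h.symm

/-- The embedding `a ↦ 1 ⊗ a`. -/
def inr : A →ₐ[k] SmashProduct actK :=
  .ofLinearMap (of actK ∘ₗ TensorProduct.mk k K A 1) rfl fun a b => by
    have h := biMul_tmul_tmul actK 1 1 b (ℛ k a)
    simp only [IsModuleAlgebra.act_unit, one_mul, smul_tmul, ← tmul_sum, ← smul_mul_assoc,
      ← Finset.sum_mul, sum_counit_smul] at h
    exact congrArg (of actK) h.symm

lemma inl_mul_inr (x : K) (a : A) : inl actK x * inr actK a = of actK (x ⊗ₜ a) := by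
  have h := biMul_eq_smashLmul actK (x ⊗ₜ[k] 1) (1 ⊗ₜ[k] a)
  simp only [map_tmul, AlgHom.toLinearMap_apply, map_one, LinearMap.mul'_apply, mul_one,
    smashLmulLeft_apply_tmul] at h
  exact congrArg (of actK) h

lemma isCovariant_inl_inr :
    IsCovariant actK (inl actK).toLinearMap (toConv (inr actK).toLinearMap) := by
  refine isCovariant_iff.2 fun y a => ?_
  refine Eq.trans ?_ ((ℛ k a).convMul_apply (toConv ((inl actK).toLinearMap ∘ₗ orbitMap actK y))
    (toConv (inr actK).toLinearMap)).symm
  have h := biMul_tmul_tmul actK 1 y 1 (ℛ k a)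
  simp only [one_mul, mul_one] at h
  refine (congrArg (of actK) h).trans ((map_sum _ _ _).trans ?_)
  simp only [← inl_mul_inr]
  rfl

variable {actK} {B : Type*} [Semiring B] [Algebra k B]

/-- The universal property of the smash product: a covariant pair of algebra maps out of `K` and `A`
extends to the algebra map `x ⊗ a ↦ f(x) g(a)`. -/
def lift (f : K →ₐ[k] B) (g : A →ₐ[k] B)
    (h : IsCovariant actK f.toLinearMap (toConv g.toLinearMap)) : SmashProduct actK →ₐ[k] B :=
  .ofLinearMap (LinearMap.mul' k B ∘ₗ map f.toLinearMap g.toLinearMap)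
    (show f 1 * g 1 = 1 by simp) h.mul'_map_biMul

section Lift

variable (f : K →ₐ[k] B) (g : A →ₐ[k] B)
  (h : IsCovariant actK f.toLinearMap (toConv g.toLinearMap))

lemma lift_comp_inl : (lift f g h).comp (inl actK) = f :=
  AlgHom.ext fun x => show f x * g 1 = f x by simp

lemma lift_comp_inr : (lift f g h).comp (inr actK) = g :=
  AlgHom.ext fun a => show f 1 * g a = g a by simp

end Lift

lemma linearMap_ext {M : Type*} [AddCommMonoid M] [Module k M] {f g : SmashProduct actK →ₗ[k] M}
    (h : ∀ x a, f (inl actK x * inr actK a) = g (inl actK x * inr actK a)) : f = g :=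
  TensorProduct.ext' fun x a => by
    have hxa := h x a
    rwa [inl_mul_inr] at hxa

lemma algHom_ext {f g : SmashProduct actK →ₐ[k] B} (hl : f.comp (inl actK) = g.comp (inl actK))
    (hr : f.comp (inr actK) = g.comp (inr actK)) : f = g :=
  AlgHom.toLinearMap_injective <| linearMap_ext fun x a => by
    have hx : f (inl actK x) = g (inl actK x) := congr($hl x)
    have ha : f (inr actK a) = g (inr actK a) := congr($hr a)
    simp only [AlgHom.toLinearMap_apply, map_mul, hx, ha]

lemma algHom_comp_of (θ : SmashProduct actK →ₐ[k] B) :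
    θ.toLinearMap ∘ₗ (of actK).toLinearMap = LinearMap.mul' k B ∘ₗ
      map (θ.comp (inl actK)).toLinearMap (θ.comp (inr actK)).toLinearMap :=
  TensorProduct.ext' fun x a => by
    have hxa := congrArg θ (inl_mul_inr actK x a)
    rw [map_mul] at hxa
    exact hxa.symm

end SmashProduct

end Smash

section Coaction

variable {B B' : Type*} [Semiring B] [Algebra k B] [Semiring B'] [Algebra k B']

/-- The map `x ↦ φ(x₍₋₁₎) ψ(x₍₀₎)`: a coaction on `X` makes the maps `X → B` a module over the
convolution ring of maps `A → B`. -/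
def coactConv (coact : X →ₗ[k] A ⊗[k] X) (φ : WithConv (A →ₗ[k] B)) (ψ : X →ₗ[k] B) :
    X →ₗ[k] B :=
  LinearMap.mul' k B ∘ₗ map φ.ofConv ψ ∘ₗ coact

lemma algHom_comp_coactConv (θ : B →ₐ[k] B') (coact : X →ₗ[k] A ⊗[k] X)
    (φ : WithConv (A →ₗ[k] B)) (ψ : X →ₗ[k] B) :
    θ.toLinearMap ∘ₗ coactConv coact φ ψ = coactConv coact (convMap θ φ) (θ.toLinearMap ∘ₗ ψ) := by
  have h : θ.toLinearMap ∘ₗ LinearMap.mul' k B ∘ₗ map φ.ofConv ψ =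
      LinearMap.mul' k B' ∘ₗ map (convMap θ φ).ofConv (θ.toLinearMap ∘ₗ ψ) := by
    ext; simp [convMap]
  exact congr($h ∘ₗ coact)

lemma coactConv_mul_convConst (coact : X →ₗ[k] A ⊗[k] X) (φ : WithConv (A →ₗ[k] B))
    {ψ : X →ₗ[k] B} {b : B} (h : ∀ x, Commute (ψ x) b) (x : X) :
    coactConv coact (φ * convConst b) ψ x = coactConv coact φ ψ x * b := by
  have hmul : LinearMap.mul' k B ∘ₗ map (φ * convConst b).ofConv ψ =
      LinearMap.mulRight k b ∘ₗ LinearMap.mul' k B ∘ₗ map φ.ofConv ψ := by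
    ext a x
    simp [mul_convConst, mul_assoc, (h x).eq]
  exact congr($hmul (coact x))

section Coalgebra

variable [Coalgebra k X] {coact : X →ₗ[k] A ⊗[k] X}

lemma coactConv_counit
    (h : ∀ x, TensorProduct.rid k A (LinearMap.lTensor A counit (coact x)) =
      counit (R := k) x • (1 : A)) (f : A →ₐ[k] B) :
    coactConv coact (toConv f.toLinearMap) (1 : WithConv (X →ₗ[k] B)).ofConv =
      (1 : WithConv (X →ₗ[k] B)).ofConv := by
  have hf : LinearMap.mul' k B ∘ₗ map f.toLinearMap (1 : WithConv (X →ₗ[k] B)).ofConv =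
      f.toLinearMap ∘ₗ (TensorProduct.rid k A).toLinearMap ∘ₗ LinearMap.lTensor A counit := by
    ext; simp [Algebra.algebraMap_eq_smul_one]
  ext x
  refine congr($hf (coact x)).trans ((congrArg f (h x)).trans ?_)
  simp [Algebra.algebraMap_eq_smul_one]

lemma coactConv_convMul
    (h : LinearMap.lTensor A comul ∘ₗ coact = tCoact coact coact ∘ₗ comul)
    {f : A →ₐ[k] B} {g : X →ₗ[k] B}
    (hfg : ∀ a x, Commute (f a) (g x)) (g' : X →ₗ[k] B) :
    toConv (coactConv coact (toConv f.toLinearMap) (toConv g * toConv g').ofConv) =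
      toConv (coactConv coact (toConv f.toLinearMap) g) *
        toConv (coactConv coact (toConv f.toLinearMap) g') := by
  have hT : LinearMap.mul' k B ∘ₗ map f.toLinearMap (LinearMap.mul' k B ∘ₗ map g g') ∘ₗ
      LinearMap.rTensor (X ⊗[k] X) (LinearMap.mul' k A) ∘ₗ
        (tensorTensorTensorComm k A X A X).toLinearMap =
      LinearMap.mul' k B ∘ₗ map (LinearMap.mul' k B ∘ₗ map f.toLinearMap g)
        (LinearMap.mul' k B ∘ₗ map f.toLinearMap g') := by
    ext a x b y
    simp [mul_assoc, (hfg b x).left_comm]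
  rw [← LinearMap.comp_assoc, ← LinearMap.comp_assoc] at hT
  ext x
  calc coactConv coact (toConv f.toLinearMap) (toConv g * toConv g').ofConv x
    _ = LinearMap.mul' k B (map f.toLinearMap (LinearMap.mul' k B ∘ₗ map g g')
          ((LinearMap.lTensor A comul ∘ₗ coact) x)) :=
        congr(LinearMap.mul' k B ($(LinearMap.map_comp_lTensor A f.toLinearMap
          (LinearMap.mul' k B ∘ₗ map g g') (comul (R := k))) (coact x))).symm
    _ = LinearMap.mul' k B (map (LinearMap.mul' k B ∘ₗ map f.toLinearMap g)
          (LinearMap.mul' k B ∘ₗ map f.toLinearMap g') (map coact coact (comul x))) := by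
        rw [h]
        exact congr($hT (map coact coact (comul x)))
    _ = _ := congr(LinearMap.mul' k B ($(TensorProduct.map_comp
        (LinearMap.mul' k B ∘ₗ map f.toLinearMap g) (LinearMap.mul' k B ∘ₗ map f.toLinearMap g')
        coact coact) (comul x))).symm

end Coalgebra

section IsYD

variable {act : A ⊗[k] X →ₗ[k] X} {coact : X →ₗ[k] A ⊗[k] X}

lemma coactConv_mul (h : IsYD act coact) (φ φ' : WithConv (A →ₗ[k] B)) (ψ : X →ₗ[k] B) :
    coactConv coact (φ * φ') ψ = coactConv coact φ (coactConv coact φ' ψ) := by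
  have hassoc : LinearMap.mul' k B ∘ₗ map (LinearMap.mul' k B ∘ₗ map φ.ofConv φ'.ofConv) ψ =
      LinearMap.mul' k B ∘ₗ map φ.ofConv (LinearMap.mul' k B ∘ₗ map φ'.ofConv ψ) ∘ₗ
        (TensorProduct.assoc k A A X).toLinearMap := by
    ext; simp [mul_assoc]
  calc coactConv coact (φ * φ') ψ
    _ = (LinearMap.mul' k B ∘ₗ map (LinearMap.mul' k B ∘ₗ map φ.ofConv φ'.ofConv) ψ) ∘ₗ
          LinearMap.rTensor X comul ∘ₗ coact := by
        rw [LinearMap.comp_assoc, ← LinearMap.comp_assoc _ (LinearMap.rTensor X comul),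
          LinearMap.map_comp_rTensor]
        rfl
    _ = LinearMap.mul' k B ∘ₗ map φ.ofConv (LinearMap.mul' k B ∘ₗ map φ'.ofConv ψ) ∘ₗ
          LinearMap.lTensor A coact ∘ₗ coact := by
        rw [hassoc, ← h.coassoc]; rfl
    _ = _ := by
        rw [← LinearMap.comp_assoc _ (LinearMap.lTensor A coact), LinearMap.map_comp_lTensor]
        rfl

lemma coactConv_one (h : IsYD act coact) (ψ : X →ₗ[k] B) : coactConv coact 1 ψ = ψ := by
  have hone : LinearMap.mul' k B ∘ₗ map (1 : WithConv (A →ₗ[k] B)).ofConv ψ =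
      ψ ∘ₗ (TensorProduct.lid k X).toLinearMap ∘ₗ LinearMap.rTensor X counit := by
    ext; simp [Algebra.algebraMap_eq_smul_one]
  calc coactConv coact 1 ψ
    _ = ψ ∘ₗ (TensorProduct.lid k X).toLinearMap ∘ₗ LinearMap.rTensor X counit ∘ₗ coact :=
        congr($hone ∘ₗ coact)
    _ = ψ := by rw [h.counit_coact, LinearMap.comp_id]

/-- The Yetter–Drinfel'd compatibility condition in convolution form. -/
lemma orbitMap_coactConv_mul (h : IsYD act coact) (f : A →ₐ[k] B) {g : X →ₗ[k] B}
    (hfg : ∀ a x, Commute (f a) (g x)) (x : X) :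
    toConv (coactConv coact (toConv f.toLinearMap) g ∘ₗ orbitMap act x) * toConv f.toLinearMap =
      toConv (LinearMap.mul' k B ∘ₗ map f.toLinearMap g ∘ₗ
        orbitMap (tAct (LinearMap.mul' k A) act) (coact x)) := by
  have hflip (c : A) (t : A ⊗[k] X) :
      LinearMap.mul' k B (map f.toLinearMap g (map (LinearMap.mul' k A) LinearMap.id
        ((TensorProduct.assoc k A A X).symm (LinearMap.lTensor A (TensorProduct.comm k X A)
          (TensorProduct.assoc k A X A (t ⊗ₜ c)))))) =
        LinearMap.mul' k B (map f.toLinearMap g t) * f c := by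
    induction t with
    | zero => simp
    | add s t hs ht => simp only [add_tmul, map_add, hs, ht, add_mul]
    | tmul b z => simp [mul_assoc, (hfg c z).eq]
  have hR (s : A ⊗[k] A) :
      LinearMap.mul' k B (map (coactConv coact (toConv f.toLinearMap) g ∘ₗ orbitMap act x)
        f.toLinearMap s) =
      LinearMap.mul' k B (map f.toLinearMap g (map (LinearMap.mul' k A) LinearMap.id
        ((TensorProduct.assoc k A A X).symm (LinearMap.lTensor A (TensorProduct.comm k X A)
          (TensorProduct.assoc k A X A (LinearMap.rTensor A coact (LinearMap.rTensor A act
            ((TensorProduct.assoc k A X A).symm (LinearMap.lTensor A (TensorProduct.comm k A X)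
              (TensorProduct.assoc k A A X (s ⊗ₜ x))))))))))) := by
    induction s with
    | zero => simp
    | add s t hs ht => simp only [add_tmul, map_add, hs, ht]
    | tmul b c => exact (hflip c _).symm
  ext a
  exact (hR (comul a)).trans
    congr(LinearMap.mul' k B (map f.toLinearMap g ($h.yd (a ⊗ₜ x)))).symm

lemma IsCovariant.coactConv (h : IsYD act coact) {f₁ f₂ : A →ₐ[k] B} {g : X →ₗ[k] B}
    (hf : ∀ a b, Commute (f₁ a) (f₂ b)) (hfg : ∀ a x, Commute (f₁ a) (g x))
    (hg : IsCovariant act g (toConv f₂.toLinearMap)) :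
    IsCovariant act (coactConv coact (toConv f₁.toLinearMap) g)
      (toConv f₁.toLinearMap * toConv f₂.toLinearMap) := by
  have hmul (w : A) : toConv (f₁.toLinearMap ∘ₗ orbitMap (LinearMap.mul' k A) w) =
      toConv f₁.toLinearMap * convConst (f₁ w) := by
    rw [mul_convConst]
    ext a
    exact map_mul f₁ a w
  have hcov (t : A ⊗[k] X) : toConv f₁.toLinearMap * toConv f₂.toLinearMap *
      convConst (LinearMap.mul' k B (map f₁.toLinearMap g t)) =
      toConv (LinearMap.mul' k B ∘ₗ map f₁.toLinearMap g ∘ₗ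
        orbitMap (tAct (LinearMap.mul' k A) act) t) * toConv f₂.toLinearMap := by
    induction t with
    | zero => simp
    | add s t hs ht =>
      simp only [map_add, hs, ht, mul_add, LinearMap.comp_add, toConv_add, add_mul]
    | tmul w z =>
      have hw : Commute (toConv f₂.toLinearMap) (convConst (f₁ w)) :=
        commute_convConst fun b => (hf w b).symm
      rw [mul'_map_orbitMap_tAct, hmul, map_tmul, LinearMap.mul'_apply, map_mul,
        mul_assoc _ _ (toConv f₂.toLinearMap), ← hg z, AlgHom.toLinearMap_apply, mul_assoc,
        ← mul_assoc (toConv f₂.toLinearMap), hw.eq]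
      simp only [mul_assoc]
  intro x
  rw [← mul_assoc, orbitMap_coactConv_mul h f₁ hfg]
  exact hcov (coact x)

lemma mul'_map_ydBraid (coact : X →ₗ[k] A ⊗[k] X) (act : A ⊗[k] Y →ₗ[k] Y) (f : Y →ₗ[k] B)
    (g : X →ₗ[k] B) (x : X) (y : Y) :
    LinearMap.mul' k B (map f g (ydBraid coact act (x ⊗ₜ y))) =
      coactConv coact (toConv (f ∘ₗ orbitMap act y)) g x := by
  have h (t : A ⊗[k] X) : LinearMap.mul' k B (map f g (LinearMap.rTensor X act
      ((TensorProduct.assoc k A Y X).symm (LinearMap.lTensor A (TensorProduct.comm k X Y)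
        (TensorProduct.assoc k A X Y (t ⊗ₜ y)))))) =
      LinearMap.mul' k B (map (f ∘ₗ orbitMap act y) g t) := by
    induction t with
    | zero => simp
    | add s t hs ht => simp only [add_tmul, map_add, hs, ht]
    | tmul b c => rfl
  exact h (coact x)

lemma coactConv_mul_of_isCovariant (h : IsYD act coact) {actY : A ⊗[k] Y →ₗ[k] Y}
    {f : Y →ₗ[k] B} {φ : WithConv (A →ₗ[k] B)} {g : X →ₗ[k] B} (hf : IsCovariant actY f φ)
    (hfg : ∀ y x, Commute (f y) (g x)) (x : X) (y : Y) :
    coactConv coact φ g x * f y =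
      LinearMap.mul' k B (map f (coactConv coact φ g) (ydBraid coact actY (x ⊗ₜ y))) := by
  rw [mul'_map_ydBraid, ← coactConv_mul h, ← hf y,
    coactConv_mul_convConst _ _ fun x => (hfg y x).symm]

end IsYD

end Coaction

section TensorAction

variable {B : Type*} [Semiring B] [Algebra k B]
  {actX : A ⊗[k] X →ₗ[k] X} {actY : A ⊗[k] Y →ₗ[k] Y}

lemma IsCovariant.tAct {f : X →ₗ[k] B} {g : Y →ₗ[k] B} {φ : WithConv (A →ₗ[k] B)}
    (hf : IsCovariant actX f φ) (hg : IsCovariant actY g φ) :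
    IsCovariant (tAct actX actY) (LinearMap.mul' k B ∘ₗ map f g) φ := fun t => by
  rw [LinearMap.comp_assoc]
  induction t with
  | zero => simp
  | add s t hs ht => simp only [map_add, mul_add, hs, ht, LinearMap.comp_add, toConv_add, add_mul]
  | tmul x y =>
    rw [mul'_map_orbitMap_tAct, mul_assoc, ← hg y, ← mul_assoc, ← hf x, mul_assoc, ← map_mul]
    rfl

lemma IsCovariant.comp {f : Y →ₗ[k] B} {φ : WithConv (A →ₗ[k] B)} (h : IsCovariant actY f φ)
    {p : X →ₗ[k] Y} (hp : p ∘ₗ actX = actY ∘ₗ LinearMap.lTensor A p) :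
    IsCovariant actX (f ∘ₗ p) φ := fun x => by
  have hx : p ∘ₗ orbitMap actX x = orbitMap actY (p x) :=
    LinearMap.ext fun a => congr($hp (a ⊗ₜ x))
  rw [LinearMap.comp_assoc, hx]
  exact h (p x)

lemma IsCovariant.convMul [Coalgebra k X]
    (h : comul ∘ₗ actX = _root_.tAct actX actX ∘ₗ LinearMap.lTensor A comul)
    {f g : X →ₗ[k] B} {φ : WithConv (A →ₗ[k] B)} (hf : IsCovariant actX f φ)
    (hg : IsCovariant actX g φ) : IsCovariant actX (toConv f * toConv g).ofConv φ :=
  (hf.tAct hg).comp h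

end TensorAction

section BraidedMul

variable {B : Type*} [Semiring B] [Algebra k B]

/-- The multiplication `(x ⊗ y)(x' ⊗ y') = x c(y ⊗ x') y'` on `K ⊗ K`, for a braiding `c`. -/
def braidedMul (c : K ⊗[k] K →ₗ[k] K ⊗[k] K) :
    (K ⊗[k] K) ⊗[k] (K ⊗[k] K) →ₗ[k] K ⊗[k] K :=
  LinearMap.lTensor K (LinearMap.mul' k K)
    ∘ₗ (TensorProduct.assoc k K K K).toLinearMap
    ∘ₗ LinearMap.rTensor K (LinearMap.rTensor K (LinearMap.mul' k K))
    ∘ₗ LinearMap.rTensor K (TensorProduct.assoc k K K K).symm.toLinearMap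
    ∘ₗ LinearMap.rTensor K (LinearMap.lTensor K c)
    ∘ₗ LinearMap.rTensor K (TensorProduct.assoc k K K K).toLinearMap
    ∘ₗ (TensorProduct.assoc k (K ⊗[k] K) K K).symm.toLinearMap

lemma mul'_map_braidedMul {c : K ⊗[k] K →ₗ[k] K ⊗[k] K} {f g : K →ₐ[k] B}
    (hfg : ∀ x y,
      g x * f y = LinearMap.mul' k B (map f.toLinearMap g.toLinearMap (c (x ⊗ₜ y))))
    (s t : K ⊗[k] K) :
    LinearMap.mul' k B (map f.toLinearMap g.toLinearMap (braidedMul c (s ⊗ₜ t))) =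
      LinearMap.mul' k B (map f.toLinearMap g.toLinearMap s) *
        LinearMap.mul' k B (map f.toLinearMap g.toLinearMap t) := by
  have houter (x y : K) (w : K ⊗[k] K) : LinearMap.mul' k B (map f.toLinearMap g.toLinearMap
      (LinearMap.lTensor K (LinearMap.mul' k K) (TensorProduct.assoc k K K K
        (LinearMap.rTensor K (LinearMap.mul' k K)
          ((TensorProduct.assoc k K K K).symm (x ⊗ₜ w)) ⊗ₜ y)))) =
      f x * LinearMap.mul' k B (map f.toLinearMap g.toLinearMap w) * g y := by
    induction w with
    | zero => simp
    | add s t hs ht => simp only [tmul_add, add_tmul, map_add, hs, ht, mul_add, add_mul]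
    | tmul p q => simp [mul_assoc]
  induction s with
  | zero => simp
  | add s s' hs hs' => simp only [add_tmul, map_add, hs, hs', add_mul]
  | tmul x₁ x₂ =>
  induction t with
  | zero => simp
  | add t t' ht ht' => simp only [tmul_add, map_add, ht, ht', mul_add]
  | tmul y₁ y₂ =>
  refine (houter x₁ y₂ (c (x₂ ⊗ₜ y₁))).trans ?_
  simp [← hfg, mul_assoc]

end BraidedMul

lemma lTensor_mul'_comp_tCoact (coactK : K →ₗ[k] A ⊗[k] K) :
    LinearMap.lTensor A (LinearMap.mul' k K) ∘ₗ tCoact coactK coactK =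
      LinearMap.mul' k (A ⊗[k] K) ∘ₗ map coactK coactK := by
  rw [tCoact, ← LinearMap.comp_assoc, LinearMap.lTensor_comp_rTensor, LinearMap.mul'_tensor,
    LinearMap.comp_assoc]

/-- The axioms which, together with `IsModuleAlgebra actK`, make `K` a bialgebra in the braided
category of left Yetter–Drinfel'd modules over `A`. -/
structure IsYDBialgebra [Coalgebra k K] (actK : A ⊗[k] K →ₗ[k] K)
    (coactK : K →ₗ[k] A ⊗[k] K) : Prop extends IsYD actK coactK where
  coact_one : coactK 1 = 1 ⊗ₜ 1
  coact_comp_mul' : coactK ∘ₗ LinearMap.mul' k K =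
    LinearMap.lTensor A (LinearMap.mul' k K) ∘ₗ tCoact coactK coactK
  counit_act : ∀ (a : A) (x : K),
    counit (R := k) (actK (a ⊗ₜ x)) = counit (R := k) a * counit (R := k) x
  coact_counit : ∀ x : K, TensorProduct.rid k A (LinearMap.lTensor A counit (coactK x)) =
    counit (R := k) x • (1 : A)
  comul_comp_act : comul ∘ₗ actK = tAct actK actK ∘ₗ LinearMap.lTensor A comul
  lTensor_comul_comp_coact :
    LinearMap.lTensor A comul ∘ₗ coactK = tCoact coactK coactK ∘ₗ comul
  comul_comp_mul' : comul ∘ₗ LinearMap.mul' k K =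
    braidedMul (ydBraid coactK actK) ∘ₗ map comul comul
  counit_mul : ∀ x y : K, counit (R := k) (x * y) = counit (R := k) x * counit (R := k) y
  counit_one : counit (R := k) (1 : K) = 1
  comul_one : comul (R := k) (1 : K) = 1 ⊗ₜ 1

section IsYDBialgebra

variable [Coalgebra k K] {actK : A ⊗[k] K →ₗ[k] K} {coactK : K →ₗ[k] A ⊗[k] K}
  (h : IsYDBialgebra actK coactK) {B : Type*} [Semiring B] [Algebra k B]

/-- The counit of `K` as an algebra map. -/
def counitAlgHom : K →ₐ[k] k :=
  .ofLinearMap counit h.counit_one h.counit_mul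

lemma isCovariant_counitAlgHom : IsCovariant actK (counitAlgHom h).toLinearMap
    (toConv (Bialgebra.counitAlgHom k A).toLinearMap) := fun x => by
  have hx : toConv ((counitAlgHom h).toLinearMap ∘ₗ orbitMap actK x) =
      convConst (counitAlgHom h x) := by
    ext a
    exact h.counit_act a x
  rw [hx]
  exact commute_convConst fun _ => .all _ _

/-- The coaction of `K` as an algebra map. -/
def coactAlgHom : K →ₐ[k] A ⊗[k] K :=
  .ofLinearMap coactK h.coact_one fun x y => by
    have hmul := h.coact_comp_mul'
    rw [lTensor_mul'_comp_tCoact] at hmul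
    exact congr($hmul (x ⊗ₜ y))

/-- The map `coactConv coactK f g` as an algebra map, for algebra maps with commuting ranges. -/
def coactConvAlgHom (f : A →ₐ[k] B) (g : K →ₐ[k] B) (hfg : ∀ a x, Commute (f a) (g x)) :
    K →ₐ[k] B :=
  (Algebra.TensorProduct.lift f g hfg).comp (coactAlgHom h)

lemma coactConvAlgHom_toLinearMap (f : A →ₐ[k] B) (g : K →ₐ[k] B)
    (hfg : ∀ a x, Commute (f a) (g x)) : (coactConvAlgHom h f g hfg).toLinearMap =
      coactConv coactK (toConv f.toLinearMap) g.toLinearMap :=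
  congr($(tensorLift_toLinearMap f g hfg) ∘ₗ coactK)

lemma coactConvAlgHom_mul {f g : K →ₐ[k] B} {φ : A →ₐ[k] B}
    (hf : IsCovariant actK f.toLinearMap (toConv φ.toLinearMap))
    (hφg : ∀ a x, Commute (φ a) (g x)) (hfg : ∀ x y, Commute (f x) (g y)) (x y : K) :
    coactConvAlgHom h φ g hφg x * f y = LinearMap.mul' k B (map f.toLinearMap
      (coactConvAlgHom h φ g hφg).toLinearMap (ydBraid coactK actK (x ⊗ₜ y))) := by
  have hxy := coactConv_mul_of_isCovariant h.toIsYD hf (g := g.toLinearMap) hfg x y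
  rwa [← coactConvAlgHom_toLinearMap h φ g hφg] at hxy

/-- The convolution of two algebra maps which commute up to the braiding, as an algebra map. -/
def braidedConvAlgHom (f g : K →ₐ[k] B) (hfg : ∀ x y, g x * f y =
    LinearMap.mul' k B (map f.toLinearMap g.toLinearMap (ydBraid coactK actK (x ⊗ₜ y)))) :
    K →ₐ[k] B :=
  .ofLinearMap (toConv f.toLinearMap * toConv g.toLinearMap).ofConv
    (congr(LinearMap.mul' k B (map f.toLinearMap g.toLinearMap $h.comul_one)).trans (by simp))
    fun x y => congr(LinearMap.mul' k B (map f.toLinearMap g.toLinearMap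
      ($h.comul_comp_mul' (x ⊗ₜ y)))).trans (mul'_map_braidedMul hfg _ _)

end IsYDBialgebra

namespace SmashProduct

section Conv

variable {actK : A ⊗[k] K →ₗ[k] K} [IsModuleAlgebra actK] {B : Type*} [Semiring B] [Algebra k B]

lemma isCovariant_comp_inl_inr (α : SmashProduct actK →ₐ[k] B) :
    IsCovariant actK (α.comp (inl actK)).toLinearMap
      (toConv (α.comp (inr actK)).toLinearMap) :=
  (isCovariant_inl_inr actK).algHom_comp α

variable {α β : SmashProduct actK →ₐ[k] B} (hαβ : ∀ u v, Commute (α u) (β v))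

/-- The restriction to `A` of the convolution `convLift` of two algebra maps. -/
def convRight : A →ₐ[k] B :=
  convAlgHom (α.comp (inr actK)) (β.comp (inr actK)) fun _ _ => hαβ _ _

lemma toConv_convRight : toConv (convRight hαβ).toLinearMap =
    toConv (α.comp (inr actK)).toLinearMap * toConv (β.comp (inr actK)).toLinearMap :=
  toConv_convAlgHom _ _ _

lemma commute_includeLeft_includeRight (u v : SmashProduct actK) :
    Commute (Algebra.TensorProduct.includeLeft (S := k) (B := SmashProduct actK) u)
      (Algebra.TensorProduct.includeRight (R := k) v) := by
  simp [Commute, SemiconjBy]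

variable [Coalgebra k K] {coactK : K →ₗ[k] A ⊗[k] K} (h : IsYDBialgebra actK coactK)

/-- The restriction to `K` of the convolution `convLift` of two algebra maps. -/
def convLeft : K →ₐ[k] B :=
  braidedConvAlgHom h (α.comp (inl actK))
    (coactConvAlgHom h (α.comp (inr actK)) (β.comp (inl actK)) fun _ _ => hαβ _ _)
    (coactConvAlgHom_mul h (isCovariant_comp_inl_inr α) _ fun _ _ => hαβ _ _)

lemma toConv_convLeft : toConv (convLeft hαβ h).toLinearMap =
    toConv (α.comp (inl actK)).toLinearMap * toConv (coactConv coactK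
      (toConv (α.comp (inr actK)).toLinearMap) (β.comp (inl actK)).toLinearMap) := by
  rw [← coactConvAlgHom_toLinearMap h _ _ fun _ _ => hαβ _ _]
  rfl

lemma isCovariant_convLeft_convRight :
    IsCovariant actK (convLeft hαβ h).toLinearMap (toConv (convRight hαβ).toLinearMap) := by
  rw [toConv_convRight, ← ofConv_toConv (convLeft hαβ h).toLinearMap, toConv_convLeft]
  refine .convMul h.comul_comp_act ?_ (.coactConv h.toIsYD (fun _ _ => hαβ _ _) (fun _ _ => hαβ _ _)
    (isCovariant_comp_inl_inr β))
  exact (isCovariant_comp_inl_inr α).mul_of_commute fun _ _ => (hαβ _ _).symm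

/-- The convolution `u ↦ α(u₍₁₎) β(u₍₂₎)`, with respect to the comultiplication of the biproduct, of
algebra maps with commuting ranges. That comultiplication is itself obtained in this way. -/
def convLift : SmashProduct actK →ₐ[k] B :=
  lift (convLeft hαβ h) (convRight hαβ) (isCovariant_convLeft_convRight hαβ h)

/-- The comultiplication of the biproduct. -/
def comulAlgHom : SmashProduct actK →ₐ[k] SmashProduct actK ⊗[k] SmashProduct actK :=
  convLift commute_includeLeft_includeRight h

section Comul

variable (θ : SmashProduct actK ⊗[k] SmashProduct actK →ₐ[k] B)

lemma toConv_comulAlgHom_inl :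
    toConv ((θ.comp (comulAlgHom h)).comp (inl actK)).toLinearMap =
      toConv ((θ.comp Algebra.TensorProduct.includeLeft).comp (inl actK)).toLinearMap *
        toConv (coactConv coactK
          (toConv ((θ.comp Algebra.TensorProduct.includeLeft).comp (inr actK)).toLinearMap)
          ((θ.comp Algebra.TensorProduct.includeRight).comp (inl actK)).toLinearMap) := by
  have hl : (comulAlgHom h).comp (inl actK) = convLeft commute_includeLeft_includeRight h :=
    lift_comp_inl _ _ (isCovariant_convLeft_convRight _ h)
  have hθ := congrArg (convMap θ) (toConv_convLeft (commute_includeLeft_includeRight) h)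
  rw [map_mul, convMap_toConv, convMap_toConv, convMap_toConv, algHom_comp_coactConv, ← hl] at hθ
  exact hθ

lemma toConv_comulAlgHom_inr :
    toConv ((θ.comp (comulAlgHom h)).comp (inr actK)).toLinearMap =
      toConv ((θ.comp Algebra.TensorProduct.includeLeft).comp (inr actK)).toLinearMap *
        toConv ((θ.comp Algebra.TensorProduct.includeRight).comp (inr actK)).toLinearMap := by
  have hr : (comulAlgHom h).comp (inr actK) = convRight commute_includeLeft_includeRight :=
    lift_comp_inr _ _ (isCovariant_convLeft_convRight _ h)
  have hθ := congrArg (convMap θ)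
    (toConv_convRight (commute_includeLeft_includeRight (actK := actK)))
  rw [map_mul, ← hr] at hθ
  exact hθ

end Comul

/-- The counit of the biproduct. -/
def biproductCounit : SmashProduct actK →ₐ[k] k :=
  lift (counitAlgHom h) (Bialgebra.counitAlgHom k A) (isCovariant_counitAlgHom h)

/-- Coassociativity in universal form: `θ` and `θ'` play the roles of `Δ ⊗ id` and `id ⊗ Δ`, while
`φ` and `ψ` stand for the inclusions of the first two and the last two of three tensor factors. -/
lemma comp_comulAlgHom_eq_comp_comulAlgHom
    {θ θ' φ ψ : SmashProduct actK ⊗[k] SmashProduct actK →ₐ[k] B}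
    (hθ : θ.comp Algebra.TensorProduct.includeLeft = φ.comp (comulAlgHom h))
    (hθ' : θ'.comp Algebra.TensorProduct.includeRight = ψ.comp (comulAlgHom h))
    (h₁ : φ.comp Algebra.TensorProduct.includeLeft =
      θ'.comp Algebra.TensorProduct.includeLeft)
    (h₂ : φ.comp Algebra.TensorProduct.includeRight = ψ.comp Algebra.TensorProduct.includeLeft)
    (h₃ : θ.comp Algebra.TensorProduct.includeRight =
      ψ.comp Algebra.TensorProduct.includeRight) :
    θ.comp (comulAlgHom h) = θ'.comp (comulAlgHom h) := by
  refine algHom_ext ?_ ?_ <;> refine AlgHom.toLinearMap_injective (toConv_injective ?_)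
  · have hψ := congrArg ofConv (toConv_comulAlgHom_inl h ψ)
    rw [ofConv_toConv] at hψ
    have hcomm (a : A) (x : K) :
        Commute ((φ.comp Algebra.TensorProduct.includeLeft).comp (inr actK) a)
          ((φ.comp Algebra.TensorProduct.includeRight).comp (inl actK) x) :=
      (commute_includeLeft_includeRight (inr actK a) (inl actK x)).map φ
    rw [toConv_comulAlgHom_inl, toConv_comulAlgHom_inl h θ', hθ, hθ',
      toConv_comulAlgHom_inl, toConv_comulAlgHom_inr, hψ, ← h₂, ← h₁,
      coactConv_convMul h.lTensor_comul_comp_coact hcomm, coactConv_mul h.toIsYD, mul_assoc, h₃]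
  · rw [toConv_comulAlgHom_inr, toConv_comulAlgHom_inr h θ', hθ, hθ',
      toConv_comulAlgHom_inr, toConv_comulAlgHom_inr, h₁, h₂, h₃, mul_assoc]

lemma toConv_biproductCounit_inl :
    toConv (((Algebra.ofId k B).comp (biproductCounit h)).comp (inl actK)).toLinearMap = 1 := by
  rw [AlgHom.comp_assoc, biproductCounit, lift_comp_inl]
  rfl

lemma toConv_biproductCounit_inr :
    toConv (((Algebra.ofId k B).comp (biproductCounit h)).comp (inr actK)).toLinearMap = 1 := by
  rw [AlgHom.comp_assoc, biproductCounit, lift_comp_inr]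
  rfl

lemma comp_comulAlgHom_eq_comp_includeRight
    {θ : SmashProduct actK ⊗[k] SmashProduct actK →ₐ[k] B}
    (hθ : θ.comp Algebra.TensorProduct.includeLeft =
      (Algebra.ofId k B).comp (biproductCounit h)) :
    θ.comp (comulAlgHom h) = θ.comp Algebra.TensorProduct.includeRight := by
  refine algHom_ext ?_ ?_ <;> refine AlgHom.toLinearMap_injective (toConv_injective ?_)
  · rw [toConv_comulAlgHom_inl, hθ, toConv_biproductCounit_inl, toConv_biproductCounit_inr,
      coactConv_one h.toIsYD, one_mul]
  · rw [toConv_comulAlgHom_inr, hθ, toConv_biproductCounit_inr, one_mul]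

lemma comp_comulAlgHom_eq_comp_includeLeft
    {θ : SmashProduct actK ⊗[k] SmashProduct actK →ₐ[k] B}
    (hθ : θ.comp Algebra.TensorProduct.includeRight =
      (Algebra.ofId k B).comp (biproductCounit h)) :
    θ.comp (comulAlgHom h) = θ.comp Algebra.TensorProduct.includeLeft := by
  refine algHom_ext ?_ ?_ <;> refine AlgHom.toLinearMap_injective (toConv_injective ?_)
  · have hinl := congrArg ofConv (toConv_biproductCounit_inl (B := B) h)
    rw [ofConv_toConv] at hinl
    rw [toConv_comulAlgHom_inl, hθ, hinl, coactConv_counit h.coact_counit, toConv_ofConv, mul_one]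
  · rw [toConv_comulAlgHom_inr, hθ, toConv_biproductCounit_inr, mul_one]

lemma comulAlgHom_coassoc :
    ((Algebra.TensorProduct.assoc k k k _ _ _).toAlgHom.comp
        (Algebra.TensorProduct.map (comulAlgHom h) (.id k (SmashProduct actK)))).comp
          (comulAlgHom h) =
      (Algebra.TensorProduct.map (.id k (SmashProduct actK)) (comulAlgHom h)).comp
        (comulAlgHom h) :=
  comp_comulAlgHom_eq_comp_comulAlgHom h
    (φ := (Algebra.TensorProduct.assoc k k k _ _ _).toAlgHom.comp
      Algebra.TensorProduct.includeLeft)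
    (ψ := Algebra.TensorProduct.includeRight)
    (AlgHom.ext fun _ => by simp) (AlgHom.ext fun _ => by simp)
    (AlgHom.ext fun _ => by simp [Algebra.TensorProduct.one_def])
    (AlgHom.ext fun _ => by simp) (AlgHom.ext fun _ => by simp [Algebra.TensorProduct.one_def])

/-- The Radford biproduct as a bialgebra. -/
abbrev biproduct : Bialgebra k (SmashProduct actK) :=
  .ofAlgHom (comulAlgHom h) (biproductCounit h) (comulAlgHom_coassoc h)
    ((comp_comulAlgHom_eq_comp_includeRight h (AlgHom.ext fun u => by simp)).trans
      (AlgHom.ext fun u => by simp))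
    ((comp_comulAlgHom_eq_comp_includeLeft h (AlgHom.ext fun u =>
      (Algebra.TensorProduct.includeRight (R := k) (A := SmashProduct actK)).commutes
        (biproductCounit h u))).trans
        (AlgHom.ext fun u => by simp))

end Conv

end SmashProduct

section BiComul

variable [Coalgebra k K] {B : Type*} [Semiring B] [Algebra k B]

lemma mul'_map_biComul (coactK : K →ₗ[k] A ⊗[k] K) (p q : K →ₗ[k] B) (p' : A →ₐ[k] B)
    (q' : A →ₗ[k] B) (hcomm : ∀ a x, Commute (p' a) (q x)) (x : K) (a : A) :
    LinearMap.mul' k B (map (LinearMap.mul' k B ∘ₗ map p p'.toLinearMap)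
      (LinearMap.mul' k B ∘ₗ map q q') (biComul comul coactK (x ⊗ₜ a))) =
    (toConv p * toConv (coactConv coactK (toConv p'.toLinearMap) q)).ofConv x *
      (toConv p'.toLinearMap * toConv q').ofConv a := by
  have hK (b c : A) (r : A ⊗[k] K) (y : K) :
      LinearMap.mul' k B (map (LinearMap.mul' k B ∘ₗ map p p'.toLinearMap)
        (LinearMap.mul' k B ∘ₗ map q q') (LinearMap.rTensor (K ⊗[k] A)
          (LinearMap.lTensor K (LinearMap.mul' k A) ∘ₗ (TensorProduct.assoc k K A A).toLinearMap)
            (tensorTensorTensorComm k (K ⊗[k] A) K A A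
              ((TensorProduct.assoc k K A K).symm (y ⊗ₜ r) ⊗ₜ (b ⊗ₜ c))))) =
      p y * LinearMap.mul' k B (map p'.toLinearMap q r) * (p' b * q' c) := by
    induction r with
    | zero => simp
    | add r r' hr hr' => simp only [tmul_add, add_tmul, map_add, hr, hr', mul_add, add_mul]
    | tmul d z => simp [mul_assoc, (hcomm b z).left_comm]
  have hKA (s : K ⊗[k] K) (t : A ⊗[k] A) :
      LinearMap.mul' k B (map (LinearMap.mul' k B ∘ₗ map p p'.toLinearMap)
        (LinearMap.mul' k B ∘ₗ map q q') (LinearMap.rTensor (K ⊗[k] A)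
          (LinearMap.lTensor K (LinearMap.mul' k A) ∘ₗ (TensorProduct.assoc k K A A).toLinearMap)
            (tensorTensorTensorComm k (K ⊗[k] A) K A A
              ((TensorProduct.assoc k K A K).symm (LinearMap.lTensor K coactK s) ⊗ₜ t)))) =
      LinearMap.mul' k B (map p (coactConv coactK (toConv p'.toLinearMap) q) s) *
        LinearMap.mul' k B (map p'.toLinearMap q' t) := by
    induction t with
    | zero => simp
    | add t t' ht ht' => simp only [tmul_add, map_add, ht, ht', mul_add]
    | tmul b c =>
    induction s with
    | zero => simp
    | add s s' hs hs' => simp only [add_tmul, map_add, hs, hs', add_mul]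
    | tmul y z => exact hK b c (coactK z) y
  exact hKA (comul x) (comul a)

end BiComul

namespace SmashProduct

section Comul

variable [Coalgebra k K] {actK : A ⊗[k] K →ₗ[k] K} [IsModuleAlgebra actK]
  {coactK : K →ₗ[k] A ⊗[k] K} (h : IsYDBialgebra actK coactK)

lemma comulAlgHom_of (t : K ⊗[k] A) : comulAlgHom h (of actK t) =
    map (of actK).toLinearMap (of actK).toLinearMap (biComul comul coactK t) := by
  induction t with
  | zero => simp
  | add s t hs ht => simp only [map_add, hs, ht]
  | tmul x a =>
  have hx := congr(($(toConv_comulAlgHom_inl h (.id k _))).ofConv x)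
  have ha := congr(($(toConv_comulAlgHom_inr h (.id k _))).ofConv a)
  rw [map_eq_mul'_map, algHom_comp_of, algHom_comp_of]
  refine Eq.trans ?_ (mul'_map_biComul coactK _ _ _ _
    (fun _ _ => (commute_includeLeft_includeRight _ _)) x a).symm
  rw [← inl_mul_inr, map_mul]
  exact congr($hx * $ha)

lemma biproductCounit_of (t : K ⊗[k] A) :
    biproductCounit h (of actK t) = biCounit counit t := rfl

lemma comulAlgHom_toLinearMap : (comulAlgHom h).toLinearMap = biComul comul coactK :=
  LinearMap.ext fun t => (comulAlgHom_of h t).trans (congr($(TensorProduct.map_id) _))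

end Comul

section Projections

variable (actK : A ⊗[k] K →ₗ[k] K) [IsModuleAlgebra actK]

/-- The projection `x ⊗ a ↦ ε(a) x`. -/
def projLeft : SmashProduct actK →ₗ[k] K :=
  (TensorProduct.rid k K).toLinearMap ∘ₗ LinearMap.lTensor K counit ∘ₗ (of actK).symm.toLinearMap

/-- The projection `x ⊗ a ↦ ε(x) a`. -/
def projRight [Coalgebra k K] : SmashProduct actK →ₗ[k] A :=
  (TensorProduct.lid k A).toLinearMap ∘ₗ LinearMap.rTensor A counit ∘ₗ (of actK).symm.toLinearMap

variable {actK}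

lemma algHom_comp_projLeft_comp_of {B : Type*} [Semiring B] [Algebra k B] (f : K →ₐ[k] B) :
    (f.toLinearMap ∘ₗ projLeft actK) ∘ₗ (of actK).toLinearMap = LinearMap.mul' k B ∘ₗ
      map f.toLinearMap ((Algebra.ofId k B).comp (Bialgebra.counitAlgHom k A)).toLinearMap := by
  ext x a
  simp [projLeft, Algebra.ofId_apply, Algebra.algebraMap_eq_smul_one]

variable [Coalgebra k K] {coactK : K →ₗ[k] A ⊗[k] K} (h : IsYDBialgebra actK coactK)

lemma mul'_map_comulAlgHom_of_tmul {B : Type*} [Semiring B] [Algebra k B]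
    {P Q : SmashProduct actK →ₗ[k] B} {p q : K →ₗ[k] B} {p' : A →ₐ[k] B} {q' : A →ₗ[k] B}
    (hP : P ∘ₗ (of actK).toLinearMap = LinearMap.mul' k B ∘ₗ map p p'.toLinearMap)
    (hQ : Q ∘ₗ (of actK).toLinearMap = LinearMap.mul' k B ∘ₗ map q q')
    (hcomm : ∀ a x, Commute (p' a) (q x)) (x : K) (a : A) :
    LinearMap.mul' k B (map P Q (comulAlgHom h (of actK (x ⊗ₜ a)))) =
    (toConv p * toConv (coactConv coactK (toConv p'.toLinearMap) q)).ofConv x *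
      (toConv p'.toLinearMap * toConv q').ofConv a := by
  rw [comulAlgHom_of, ← mul'_map_biComul coactK p q p' q' hcomm, ← hP, ← hQ, map_comp]
  rfl

lemma algHom_comp_projRight_comp_of {B : Type*} [Semiring B] [Algebra k B] (f : A →ₐ[k] B) :
    (f.toLinearMap ∘ₗ projRight actK) ∘ₗ (of actK).toLinearMap = LinearMap.mul' k B ∘ₗ
      map (1 : WithConv (K →ₗ[k] B)).ofConv f.toLinearMap := by
  ext x a
  simp [projRight, Algebra.algebraMap_eq_smul_one]

lemma toConv_ofId_comp_counitAlgHom {B : Type*} [Semiring B] [Algebra k B] :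
    toConv ((Algebra.ofId k B).comp (Bialgebra.counitAlgHom k A)).toLinearMap = 1 := rfl

/-- The projection `x ⊗ a ↦ ε(a) x` as a map of coalgebras. -/
def projLeftCoalgHom : letI := biproduct h; SmashProduct actK →ₗc[k] K :=
  letI := biproduct h
  { __ := projLeft actK
    counit_comp := linearMap_ext fun x a => by
      rw [inl_mul_inr]
      refine Eq.trans ?_ (biproductCounit_of h (x ⊗ₜ a)).symm
      simp [projLeft, biCounit, mul_comm]
    map_comp_comul := linearMap_ext fun x a => by
      rw [inl_mul_inr, map_eq_mul'_map]
      refine (mul'_map_comulAlgHom_of_tmul h (algHom_comp_projLeft_comp_of _)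
        (algHom_comp_projLeft_comp_of _) (fun _ _ => Algebra.commute_algebraMap_left _ _)
        x a).trans ?_
      simp only [toConv_ofId_comp_counitAlgHom, coactConv_one h.toIsYD,
        toConv_includeLeft_mul_toConv_includeRight]
      simp [projLeft, Algebra.algebraMap_eq_smul_one] }

/-- The projection `x ⊗ a ↦ ε(x) a` as a map of coalgebras. -/
def projRightCoalgHom : letI := biproduct h; SmashProduct actK →ₗc[k] A :=
  letI := biproduct h
  { __ := projRight actK
    counit_comp := linearMap_ext fun x a => by
      rw [inl_mul_inr]
      refine Eq.trans ?_ (biproductCounit_of h (x ⊗ₜ a)).symm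
      simp [projRight, biCounit]
    map_comp_comul := linearMap_ext fun x a => by
      rw [inl_mul_inr, map_eq_mul'_map]
      refine (mul'_map_comulAlgHom_of_tmul h (algHom_comp_projRight_comp_of _)
        (algHom_comp_projRight_comp_of _) (fun _ _ => Algebra.commute_algebraMap_right _ _)
        x a).trans ?_
      simp only [coactConv_counit h.coact_counit, toConv_includeLeft_mul_toConv_includeRight]
      simp [projRight, Algebra.algebraMap_eq_smul_one] }

lemma convMul_projLeft_projRight : letI := biproduct h
    toConv ((inl actK).toLinearMap ∘ₗ (projLeftCoalgHom h).toLinearMap) *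
        toConv ((inr actK).toLinearMap ∘ₗ (projRightCoalgHom h).toLinearMap) =
      toConv LinearMap.id := by
  have hid (x : K) (a : A) := mul'_map_comulAlgHom_of_tmul h
    (algHom_comp_projLeft_comp_of (inl actK)) (algHom_comp_projRight_comp_of (inr actK))
    (fun a _ => Algebra.commute_algebraMap_left (counit (R := k) a) _) x a
  simp only [toConv_ofId_comp_counitAlgHom, coactConv_one h.toIsYD, toConv_ofConv, mul_one,
    one_mul] at hid
  let := biproduct h
  refine WithConv.ofConv_injective (linearMap_ext fun x a => ?_)
  rw [inl_mul_inr]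
  exact (hid x a).trans (inl_mul_inr actK x a)

lemma isUnit_toConv_id (hK : IsUnit (toConv (LinearMap.id : K →ₗ[k] K))) : letI := biproduct h
    IsUnit (toConv (LinearMap.id : SmashProduct actK →ₗ[k] SmashProduct actK)) :=
  letI := biproduct h
  isUnit_toConv_id_of_factorization (inl actK) (projLeftCoalgHom h) (inr actK)
    (projRightCoalgHom h) hK
    (isUnit_iff_exists.2 ⟨_, LinearMap.id_mul_antipode, LinearMap.antipode_mul_id⟩)
    (convMul_projLeft_projRight h)

end Projections

end SmashProduct

end Radford

/-- Let `A` be a Hopf algebra over a field `k` and `K` a Hopf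
algebra in the braided category of left Yetter–Drinfel'd modules over `A`.  Then the
Radford biproduct `K ⋊ A` (the vector space `K ⊗ A` with the smash product
multiplication, unit `1 ⊗ 1`, cosmash comultiplication and counit `ε_K ⊗ ε_A`)
is a Hopf algebra over `k`: a bialgebra whose identity has a convolution inverse. -/
theorem radford_biproduct_hopf
    (actK : A ⊗[k] K →ₗ[k] K) (coactK : K →ₗ[k] A ⊗[k] K)
    (comulK : K →ₗ[k] K ⊗[k] K) (counitK : K →ₗ[k] k) (SK : K →ₗ[k] K)
    -- `K` is a Yetter–Drinfel'd module over `A`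
    (hYD : IsYD actK coactK)
    -- `K` is a `k`-coalgebra
    (hcoassoc : (TensorProduct.assoc k K K K).toLinearMap
        ∘ₗ LinearMap.rTensor K comulK ∘ₗ comulK = LinearMap.lTensor K comulK ∘ₗ comulK)
    (hcounit₁ : (TensorProduct.lid k K).toLinearMap
        ∘ₗ LinearMap.rTensor K counitK ∘ₗ comulK = LinearMap.id)
    (hcounit₂ : (TensorProduct.rid k K).toLinearMap
        ∘ₗ LinearMap.lTensor K counitK ∘ₗ comulK = LinearMap.id)
    -- the unit of `K` is `A`-linear and `A`-colinear
    (hunit_act : ∀ a : A, actK (a ⊗ₜ[k] (1 : K)) = Coalgebra.counit (R := k) a • (1 : K))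
    (hunit_coact : coactK 1 = (1 : A) ⊗ₜ[k] (1 : K))
    -- the counit of `K` is `A`-linear and `A`-colinear
    (hcounit_act : ∀ (a : A) (h : K),
      counitK (actK (a ⊗ₜ[k] h)) = Coalgebra.counit (R := k) a * counitK h)
    (hcounit_coact : ∀ h : K,
      (TensorProduct.rid k A) (LinearMap.lTensor A counitK (coactK h))
        = counitK h • (1 : A))
    -- the multiplication of `K` is `A`-linear and `A`-colinear
    (hmul_act : actK ∘ₗ LinearMap.lTensor A (LinearMap.mul' k K)
        = LinearMap.mul' k K ∘ₗ tAct actK actK)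
    (hmul_coact : coactK ∘ₗ LinearMap.mul' k K
        = LinearMap.lTensor A (LinearMap.mul' k K) ∘ₗ tCoact coactK coactK)
    -- the comultiplication of `K` is `A`-linear and `A`-colinear
    (hcomul_act : comulK ∘ₗ actK = tAct actK actK ∘ₗ LinearMap.lTensor A comulK)
    (hcomul_coact : LinearMap.lTensor A comulK ∘ₗ coactK = tCoact coactK coactK ∘ₗ comulK)
    -- the braided bialgebra axiom `Δ_K(hk) = h₍₁₎ ((h₍₂₎)₍₋₁₎·k₍₁₎) ⊗ (h₍₂₎)₍₀₎ k₍₂₎`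
    (hbraided : comulK ∘ₗ LinearMap.mul' k K
        = LinearMap.lTensor K (LinearMap.mul' k K)
          ∘ₗ (TensorProduct.assoc k K K K).toLinearMap
          ∘ₗ LinearMap.rTensor K (LinearMap.rTensor K (LinearMap.mul' k K))
          ∘ₗ LinearMap.rTensor K (TensorProduct.assoc k K K K).symm.toLinearMap
          ∘ₗ LinearMap.rTensor K (LinearMap.lTensor K (ydBraid coactK actK))
          ∘ₗ LinearMap.rTensor K (TensorProduct.assoc k K K K).toLinearMap
          ∘ₗ (TensorProduct.assoc k (K ⊗[k] K) K K).symm.toLinearMap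
          ∘ₗ TensorProduct.map comulK comulK)
    -- `ε_K` is an algebra map and `Δ_K(1) = 1 ⊗ 1`
    (hcounit_mul : ∀ h h' : K, counitK (h * h') = counitK h * counitK h')
    (hcounit_one : counitK 1 = 1)
    (hcomul_one : comulK 1 = (1 : K) ⊗ₜ[k] (1 : K))
    -- `S_K` is a convolution inverse of the identity of `K`
    (hSK₁ : ∀ h : K, LinearMap.mul' k K (LinearMap.rTensor K SK (comulK h))
        = counitK h • (1 : K))
    (hSK₂ : ∀ h : K, LinearMap.mul' k K (LinearMap.lTensor K SK (comulK h))
        = counitK h • (1 : K)) :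
    -- (1) the smash product multiplication is associative and unital
    (biMul (A := A) (K := K) actK ∘ₗ LinearMap.rTensor (K ⊗[k] A) (biMul actK)
      = biMul actK ∘ₗ LinearMap.lTensor (K ⊗[k] A) (biMul actK)
        ∘ₗ (TensorProduct.assoc k (K ⊗[k] A) (K ⊗[k] A) (K ⊗[k] A)).toLinearMap)
    ∧ (∀ u : K ⊗[k] A,
        biMul actK (((1 : K) ⊗ₜ[k] (1 : A)) ⊗ₜ[k] u) = u
        ∧ biMul actK (u ⊗ₜ[k] ((1 : K) ⊗ₜ[k] (1 : A))) = u)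
    -- (2) the cosmash comultiplication is coassociative and counital
    ∧ ((TensorProduct.assoc k (K ⊗[k] A) (K ⊗[k] A) (K ⊗[k] A)).toLinearMap
        ∘ₗ LinearMap.rTensor (K ⊗[k] A) (biComul comulK coactK) ∘ₗ biComul comulK coactK
      = LinearMap.lTensor (K ⊗[k] A) (biComul comulK coactK) ∘ₗ biComul comulK coactK)
    ∧ ((TensorProduct.lid k (K ⊗[k] A)).toLinearMap
        ∘ₗ LinearMap.rTensor (K ⊗[k] A) (biCounit counitK) ∘ₗ biComul comulK coactK
      = LinearMap.id)
    ∧ ((TensorProduct.rid k (K ⊗[k] A)).toLinearMap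
        ∘ₗ LinearMap.lTensor (K ⊗[k] A) (biCounit counitK) ∘ₗ biComul comulK coactK
      = LinearMap.id)
    -- (3) comultiplication and counit are algebra maps (bialgebra axioms)
    ∧ (biComul comulK coactK ∘ₗ biMul actK
      = TensorProduct.map (biMul actK) (biMul actK)
        ∘ₗ (TensorProduct.tensorTensorTensorComm k
            (K ⊗[k] A) (K ⊗[k] A) (K ⊗[k] A) (K ⊗[k] A)).toLinearMap
        ∘ₗ TensorProduct.map (biComul comulK coactK) (biComul comulK coactK))
    ∧ (biComul comulK coactK ((1 : K) ⊗ₜ[k] (1 : A))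
        = ((1 : K) ⊗ₜ[k] (1 : A)) ⊗ₜ[k] ((1 : K) ⊗ₜ[k] (1 : A)))
    ∧ (∀ u v : (K ⊗[k] A),
        biCounit counitK (biMul actK (u ⊗ₜ[k] v)) = biCounit counitK u * biCounit counitK v)
    ∧ (biCounit counitK ((1 : K) ⊗ₜ[k] (1 : A)) = 1)
    -- (4) the identity map has a convolution inverse: an antipode
    ∧ (∃ S : K ⊗[k] A →ₗ[k] K ⊗[k] A,
        (∀ u : K ⊗[k] A,
          biMul actK (LinearMap.rTensor (K ⊗[k] A) S (biComul comulK coactK u))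
            = biCounit counitK u • ((1 : K) ⊗ₜ[k] (1 : A)))
        ∧ (∀ u : K ⊗[k] A,
          biMul actK (LinearMap.lTensor (K ⊗[k] A) S (biComul comulK coactK u))
            = biCounit counitK u • ((1 : K) ⊗ₜ[k] (1 : A)))) := by
  let : Coalgebra k K := Radford.coalgebraOfUnitors comulK counitK hcoassoc hcounit₁ hcounit₂
  let : Radford.IsModuleAlgebra actK := ⟨hYD.act_one, hYD.act_mul, hunit_act, hmul_act⟩
  have h : Radford.IsYDBialgebra actK coactK := ⟨hYD, hunit_coact, hmul_coact, hcounit_act,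
    hcounit_coact, hcomul_act, hcomul_coact, hbraided, hcounit_mul, hcounit_one, hcomul_one⟩
  let := Radford.SmashProduct.biproduct h
  have hcomul : biComul comulK coactK = (Radford.SmashProduct.comulAlgHom h).toLinearMap :=
    (Radford.SmashProduct.comulAlgHom_toLinearMap h).symm
  have hcounit : biCounit counitK = (Radford.SmashProduct.biproductCounit h).toLinearMap := rfl
  have hmul : biMul actK = LinearMap.mul' k (Radford.SmashProduct actK) :=
    TensorProduct.ext' fun _ _ => rfl
  rw [hcomul, hcounit, hmul]
  refine ⟨?_, ?_, ?_, ?_, ?_, ?_, ?_, ?_, ?_, ?_⟩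
  · exact TensorProduct.ext_threefold (mul_assoc (G := Radford.SmashProduct actK))
  · exact fun u => ⟨one_mul (M := Radford.SmashProduct actK) u,
      mul_one (M := Radford.SmashProduct actK) u⟩
  · exact Coalgebra.coassoc (R := k) (A := Radford.SmashProduct actK)
  · exact Radford.lid_comp_rTensor_counit_comp_comul (R := k) (C := Radford.SmashProduct actK)
  · exact Radford.rid_comp_lTensor_counit_comp_comul (R := k) (C := Radford.SmashProduct actK)
  · exact Radford.comul_comp_mul' (R := k) (H := Radford.SmashProduct actK)
  · exact Bialgebra.comul_one (R := k) (A := Radford.SmashProduct actK)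
  · exact Bialgebra.counit_mul (R := k) (A := Radford.SmashProduct actK)
  · exact Bialgebra.counit_one (R := k) (A := Radford.SmashProduct actK)
  · exact (Radford.exists_antipode_iff (R := k) (H := Radford.SmashProduct actK)).2
      (Radford.SmashProduct.isUnit_toConv_id h (Radford.exists_antipode_iff.1 ⟨SK, hSK₁, hSK₂⟩))

end Biproduct

end
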